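/- Let C be an n×n nonnegative matrix with no zero row, A = diag(C·1)⁻¹·C its row-normalization (A_{ij} = C_{ij}/Σ_k C_{ik}), d ∈ ℝⁿ_{>0}, and g₂ an admissible weight function. For γ ∈ (0,1), define f_γ : Σ → Σ by f_γ(x) = x·M_γ(x), where M_γ(x)_{ij} = γ·A_{ij} + (1−γ)·d_j g₂(x_j)/Σ_k d_k g₂(x_k). Then for every norm ‖·‖ on ℝⁿ and every ε > 0, there exists γ_ε ∈ (0,1) such that for every γ with γ_ε < γ < 1 and every fixed point x ∈ Σ of f_γ, there exists a stochastic vector u ∈ Σ with u·A = u and ‖x − u‖ < ε. -/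

import Mathlib

/-!
Split `M_γ(x)` as `γ A` plus a rank-one teleportation term: a fixed point of `f_γ` in the simplex
solves `x = γ (x A) + (1 - γ) v` with `v` a probability vector. At `γ = 1` this equation says that
`x` is invariant, whatever `v` is. The pair `(x, v)` ranges over a compact set, so the solution set
is upper semicontinuous in `γ`: for `γ` near `1` its `x`-component is close to the set of invariant
measures. Forgetting how `v` depends on `x` makes the estimate uniform in `d` and `g₂`.
-/

open Set Matrix

/-- An admissible weight function. -/
def IsAdmissible (g g' : ℝ → ℝ) : Prop :=
  (∀ x ∈ Set.Icc (0:ℝ) 1, HasDerivWithinAt g (g' x) (Set.Icc (0:ℝ) 1) x) ∧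
  ContinuousOn g' (Set.Icc (0:ℝ) 1) ∧
  g 0 = 1 ∧
  (∀ x ∈ Set.Icc (0:ℝ) 1, 0 < g x) ∧
  (∀ x ∈ Set.Icc (0:ℝ) 1, 0 < g' x)

/-- The row-normalization `A = diag(C·1)⁻¹·C` of `C`. -/
noncomputable def rowNorm {n : ℕ} (C : Matrix (Fin n) (Fin n) ℝ) :
    Matrix (Fin n) (Fin n) ℝ :=
  Matrix.of fun i j => C i j / ∑ k, C i k

/-- The transition matrix `M_γ(x)_{ij} = γ·A_{ij} + (1−γ)·d_j g₂(x_j)/Σ_k d_k g₂(x_k)`. -/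
noncomputable def Mγmat {n : ℕ} (C : Matrix (Fin n) (Fin n) ℝ) (d : Fin n → ℝ)
    (g₂ : ℝ → ℝ) (γ : ℝ) (x : Fin n → ℝ) : Matrix (Fin n) (Fin n) ℝ :=
  Matrix.of fun i j =>
    γ * rowNorm C i j + (1 - γ) * (d j * g₂ (x j) / ∑ k, d k * g₂ (x k))

/-- The map `f_γ(x) = x · M_γ(x)`. -/
noncomputable def fγ {n : ℕ} (C : Matrix (Fin n) (Fin n) ℝ) (d : Fin n → ℝ)
    (g₂ : ℝ → ℝ) (γ : ℝ) (x : Fin n → ℝ) : Fin n → ℝ :=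
  Matrix.vecMul x (Mγmat C d g₂ γ x)

open Filter Topology

section Compactness

theorem eventually_forall_of_eq_of_isCompact {Λ Z Y : Type*} [TopologicalSpace Λ]
    [TopologicalSpace Z] [TopologicalSpace Y] [T2Space Y] {K : Set Z} (hK : IsCompact K)
    {f g : Λ × Z → Y} {a : Λ} (hf : ∀ z ∈ K, ContinuousAt f (a, z))
    (hg : ∀ z ∈ K, ContinuousAt g (a, z)) {P : Z → Prop}
    (hP : ∀ z ∈ K, f (a, z) = g (a, z) → ∀ᶠ w in 𝓝 z, P w) :
    ∀ᶠ l in 𝓝 a, ∀ z ∈ K, f (l, z) = g (l, z) → P z := by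
  refine hK.eventually_forall_of_forall_eventually fun z hz => ?_
  by_cases hfg : f (a, z) = g (a, z)
  · filter_upwards [continuousAt_snd.eventually (hP z hz hfg)] with w hw _ using hw
  · filter_upwards [(hf z hz).ne_iff_eventually_ne (hg z hz) |>.1 hfg] with w hw h
    exact absurd h hw

theorem eventually_exists_fixed_sub_mem_of_damped {E : Type*} [AddCommGroup E] [Module ℝ E]
    [TopologicalSpace E] [IsTopologicalAddGroup E] [ContinuousSMul ℝ E] [T2Space E]
    {K L : Set E} (hK : IsCompact K) (hL : IsCompact L) {T : E → E} (hT : Continuous T)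
    {W : Set E} (hW : W ∈ 𝓝 0) :
    ∀ᶠ γ : ℝ in 𝓝 1, ∀ x ∈ K, ∀ v ∈ L, γ • T x + (1 - γ) • v = x →
      ∃ u ∈ K, T u = u ∧ x - u ∈ W := by
  have near_fixed : ∀ z ∈ K ×ˢ L, (1 : ℝ) • T z.1 + (1 - 1 : ℝ) • z.2 = z.1 →
      ∀ᶠ w : E × E in 𝓝 z, ∃ u ∈ K, T u = u ∧ w.1 - u ∈ W := by
    rintro ⟨u, v⟩ ⟨hu, -⟩ hfix
    have hTu : T u = u := by simpa using hfix
    have hsub : Tendsto (fun w : E × E => w.1 - u) (𝓝 (u, v)) (𝓝 0) :=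
      Continuous.tendsto' (by fun_prop) _ _ (sub_self u)
    filter_upwards [hsub hW] with w hw using ⟨u, hu, hTu, hw⟩
  have hev := eventually_forall_of_eq_of_isCompact (hK.prod hL)
    (f := fun q : ℝ × E × E => q.1 • T q.2.1 + (1 - q.1) • q.2.2) (g := fun q => q.2.1)
    (fun _ _ => by fun_prop) (fun _ _ => by fun_prop) near_fixed
  filter_upwards [hev] with γ hγ x hx v hv using hγ (x, v) ⟨hx, hv⟩

end Compactness

section Teleportation

variable {ι : Type*} [Fintype ι]

theorem div_sum_mem_stdSimplex {𝕜 : Type*} [Field 𝕜] [LinearOrder 𝕜] [IsStrictOrderedRing 𝕜]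
    {w : ι → 𝕜} (hw : ∀ i, 0 ≤ w i) (hsum : ∑ i, w i ≠ 0) :
    (fun i => w i / ∑ k, w k) ∈ stdSimplex 𝕜 ι :=
  ⟨fun i => div_nonneg (hw i) (Finset.sum_nonneg fun k _ => hw k), by
    rw [← Finset.sum_div, div_self hsum]⟩

/-- The teleportation distribution of the damped walk at the state `x`: the vector of weights
`d_j g(x_j)`, normalized to total mass one. It is the common row of the rank-one part of `Mγmat`. -/
noncomputable def teleport (d : ι → ℝ) (g : ℝ → ℝ) (x : ι → ℝ) : ι → ℝ :=
  fun j => d j * g (x j) / ∑ k, d k * g (x k)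

theorem teleport_mem_stdSimplex {d : ι → ℝ} (hd : ∀ i, 0 < d i) {g : ℝ → ℝ}
    (hg : ∀ t ∈ Icc (0 : ℝ) 1, 0 < g t) {x : ι → ℝ} (hx : x ∈ stdSimplex ℝ ι) :
    teleport d g x ∈ stdSimplex ℝ ι := by
  have weight_pos : ∀ i, 0 < d i * g (x i) := fun i =>
    mul_pos (hd i) (hg _ (mem_Icc_of_mem_stdSimplex hx i))
  obtain ⟨i, -, -⟩ := Finset.exists_ne_zero_of_sum_ne_zero (hx.2.trans_ne one_ne_zero)
  exact div_sum_mem_stdSimplex (fun i => (weight_pos i).le)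
    (Finset.sum_pos (fun i _ => weight_pos i) ⟨i, Finset.mem_univ i⟩).ne'

theorem Mγmat_eq_add_vecMulVec {n : ℕ} (C : Matrix (Fin n) (Fin n) ℝ) (d : Fin n → ℝ)
    (g : ℝ → ℝ) (γ : ℝ) (x : Fin n → ℝ) :
    Mγmat C d g γ x = γ • rowNorm C + (1 - γ) • vecMulVec 1 (teleport d g x) := by
  ext i j
  simp [Mγmat, teleport]

theorem fγ_eq_smul_add_smul_teleport {n : ℕ} (C : Matrix (Fin n) (Fin n) ℝ) (d : Fin n → ℝ)
    (g : ℝ → ℝ) (γ : ℝ) {x : Fin n → ℝ} (hx : ∑ i, x i = 1) :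
    fγ C d g γ x = γ • (x ᵥ* rowNorm C) + (1 - γ) • teleport d g x := by
  rw [fγ, Mγmat_eq_add_vecMulVec, vecMul_add, vecMul_smul, vecMul_smul, vecMul_vecMulVec,
    dotProduct_one, hx, one_smul]

end Teleportation

theorem damping_to_one_fixed_points_near_invariant_measures_general {ι : Type*} [Fintype ι]
    (A : Matrix ι ι ℝ) (p : Seminorm ℝ (ι → ℝ)) {ε : ℝ} (hε : 0 < ε) :
    ∃ γε : ℝ, 0 < γε ∧ γε < 1 ∧
      ∀ γ : ℝ, γε < γ → γ < 1 →
        ∀ x ∈ stdSimplex ℝ ι, ∀ v ∈ stdSimplex ℝ ι, γ • (x ᵥ* A) + (1 - γ) • v = x →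
          ∃ u ∈ stdSimplex ℝ ι, u ᵥ* A = u ∧ p (x - u) < ε := by
  have hp : Continuous p := p.convexOn.locallyLipschitz.continuous
  have hball : {y | p y < ε} ∈ 𝓝 0 :=
    (isOpen_lt hp continuous_const).mem_nhds (by simpa using hε)
  have hev := eventually_exists_fixed_sub_mem_of_damped (isCompact_stdSimplex ℝ ι)
    (isCompact_stdSimplex ℝ ι) (T := fun x => x ᵥ* A) (by fun_prop) hball
  obtain ⟨γε, ⟨hγε, hγε_one⟩, hIoo⟩ :=
    (mem_nhdsLT_iff_exists_mem_Ico_Ioo_subset one_half_lt_one).1 (hev.filter_mono inf_le_left)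
  exact ⟨γε, one_half_pos.trans_le hγε, hγε_one, fun γ h₀ h₁ => hIoo ⟨h₀, h₁⟩⟩

/-- As the damping factor `γ` tends to `1`, fixed points of `f_γ` approach the set of
invariant measures of the row-normalization `A` of `C`. -/
theorem damping_to_one_fixed_points_near_invariant_measures
    (n : ℕ) (C : Matrix (Fin n) (Fin n) ℝ)
    (hC0 : ∀ i j, 0 ≤ C i j) (hrow : ∀ i, ∃ j, 0 < C i j)
    (d : Fin n → ℝ) (hd : ∀ i, 0 < d i)
    (g₂ g₂' : ℝ → ℝ) (hg₂ : IsAdmissible g₂ g₂')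
    (N : (Fin n → ℝ) → ℝ)
    (hN_add : ∀ v w, N (v + w) ≤ N v + N w)
    (hN_smul : ∀ (c : ℝ) (v : Fin n → ℝ), N (c • v) = |c| * N v)
    (hN_def : ∀ v, N v = 0 → v = 0)
    (ε : ℝ) (hε : 0 < ε) :
    ∃ γε : ℝ, 0 < γε ∧ γε < 1 ∧
      ∀ γ : ℝ, γε < γ → γ < 1 →
        ∀ x ∈ stdSimplex ℝ (Fin n), fγ C d g₂ γ x = x →
          ∃ u ∈ stdSimplex ℝ (Fin n),
            Matrix.vecMul u (rowNorm C) = u ∧ N (x - u) < ε := by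
  obtain ⟨γε, hpos, hlt, h⟩ := damping_to_one_fixed_points_near_invariant_measures_general
    (rowNorm C) (Seminorm.of N hN_add hN_smul) hε
  exact ⟨γε, hpos, hlt, fun γ hγ hγ_one x hx hfix => h γ hγ hγ_one x hx _
    (teleport_mem_stdSimplex hd hg₂.2.2.2.1 hx)
    ((fγ_eq_smul_add_smul_teleport C d g₂ γ hx.2).symm.trans hfix)⟩
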